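/- For k ∈ ℕ let f_k : ℝ → ℝ be defined by f_k(x) = 2^{(k−1)/2}·(χ_{[1/2−2^{−k},1/2]}(x) − χ_{[1/2,1/2+2^{−k}]}(x)). There is an absolute constant C > 0 such that for every k ≥ 2, ∫_1^{+∞} | ∫_{1/2−2^{−k}}^{1/2+2^{−k}} f_k(y)/(x−y) dy |² dx ≤ C · 2^{−k}; in particular these tail integrals tend to 0 as k → ∞. -/

import Mathlib

open MeasureTheory

/-- The functions `f_k(x) = 2^{(k-1)/2} (χ_{[1/2-2^{-k},1/2]}(x) - χ_{[1/2,1/2+2^{-k}]}(x))`. -/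
noncomputable def f (k : ℕ) (x : ℝ) : ℝ :=
  (2 : ℝ) ^ (((k : ℝ) - 1) / 2) *
    ((Set.Icc (1/2 - (2:ℝ) ^ (-(k:ℝ))) (1/2)).indicator 1 x -
      (Set.Icc (1/2 : ℝ) (1/2 + (2:ℝ) ^ (-(k:ℝ)))).indicator 1 x)

theorem f_bound (k : ℕ) (y : ℝ) : |f k y| ≤ (2 : ℝ) ^ (((k : ℝ) - 1) / 2) := by
  unfold f
  have hA : (0:ℝ) < (2 : ℝ) ^ (((k : ℝ) - 1) / 2) := by positivity
  rw [abs_mul, abs_of_pos hA]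
  refine mul_le_of_le_one_right hA.le ?_
  simp only [Set.indicator_apply, Pi.one_apply]
  split_ifs <;> norm_num

theorem inner_bound (k : ℕ) (hk : 2 ≤ k) (x : ℝ) (hx : 1 ≤ x) :
    |∫ y in Set.Icc (1/2 - (2:ℝ) ^ (-(k:ℝ))) (1/2 + (2:ℝ) ^ (-(k:ℝ))),
                f k y / (x - y)| ^ 2 ≤ 32 * (2:ℝ) ^ (-(k:ℝ)) * x ^ (-2:ℝ) := by
  have hd : (2:ℝ) ^ (-(k:ℝ)) ≤ 1/4 := by
    have h : (2:ℝ) ^ (-(k:ℝ)) ≤ (2:ℝ) ^ (-2:ℝ) := by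
      apply Real.rpow_le_rpow_of_exponent_le (by norm_num)
      have : (2:ℝ) ≤ k := by exact_mod_cast hk
      linarith
    refine h.trans ?_
    rw [Real.rpow_neg (by norm_num)]
    norm_num
  have hsq : ((2 : ℝ) ^ (((k : ℝ) - 1) / 2)) ^ 2 * (2:ℝ) ^ (-(k:ℝ)) = 1/2 := by
    rw [← Real.rpow_natCast, ← Real.rpow_mul (by norm_num), ← Real.rpow_add (by norm_num)]
    have : ((k : ℝ) - 1) / 2 * ((2:ℕ):ℝ) + -(k:ℝ) = -1 := by push_cast; ring
    rw [this, Real.rpow_neg_one]; norm_num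
  have hd0 : (0:ℝ) < (2:ℝ) ^ (-(k:ℝ)) := by positivity
  have hA0 : (0:ℝ) < (2 : ℝ) ^ (((k : ℝ) - 1) / 2) := by positivity
  have hb := f_bound k
  generalize (2:ℝ) ^ (-(k:ℝ)) = d at *
  generalize (2 : ℝ) ^ (((k : ℝ) - 1) / 2) = A at *
  have hx0 : 0 < x := by linarith
  have h1 : ‖∫ y in Set.Icc (1/2 - d) (1/2 + d), f k y / (x - y)‖
      ≤ (A * (4 / x)) * volume.real (Set.Icc (1/2 - d) (1/2 + d)) := by
    apply norm_setIntegral_le_of_norm_le_const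
    · simp
    · intro y hy
      have hy2 : x / 4 ≤ x - y := by linarith [hy.2]
      have hp : 0 < x - y := by linarith
      rw [Real.norm_eq_abs, abs_div, abs_of_pos hp, div_eq_mul_inv]
      refine mul_le_mul (hb y) ?_ (by positivity) hA0.le
      rw [show 4 / x = (x/4)⁻¹ by rw [inv_div]]
      exact inv_anti₀ (by positivity) hy2
  rw [Real.volume_real_Icc_of_le (by linarith), Real.norm_eq_abs] at h1
  refine (pow_le_pow_left₀ (abs_nonneg _) h1 2).trans (le_of_eq ?_)
  have hxx : x ^ (-2:ℝ) = (x^2)⁻¹ := by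
    rw [Real.rpow_neg hx0.le]; norm_num
  rw [hxx]
  field_simp
  linear_combination 256 * d * hsq

theorem outer_bound (k : ℕ) (hk : 2 ≤ k) :
    ∫ x in Set.Ici (1:ℝ),
            |∫ y in Set.Icc (1/2 - (2:ℝ) ^ (-(k:ℝ))) (1/2 + (2:ℝ) ^ (-(k:ℝ))),
                f k y / (x - y)| ^ 2
          ≤ 32 * (2:ℝ) ^ (-(k:ℝ)) := by
  have hi : ∫ x in Set.Ici (1:ℝ), 32 * (2:ℝ) ^ (-(k:ℝ)) * x ^ (-2:ℝ)
      = 32 * (2:ℝ) ^ (-(k:ℝ)) := by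
    rw [integral_Ici_eq_integral_Ioi, integral_const_mul,
      integral_Ioi_rpow_of_lt (by norm_num) (by norm_num)]
    norm_num
  refine le_trans ?_ hi.le
  apply integral_mono_of_nonneg
  · exact Filter.Eventually.of_forall fun x => by positivity
  · apply Integrable.const_mul
    exact (integrableOn_Ici_iff_integrableOn_Ioi).2
      (integrableOn_Ioi_rpow_of_lt (by norm_num) (by norm_num))
  · filter_upwards [ae_restrict_mem measurableSet_Ici] with x hx
    exact inner_bound k hk x hx

/-- There is an absolute constant `C > 0` such that for every `k ≥ 2`,
`∫_1^∞ |∫_{1/2-2^{-k}}^{1/2+2^{-k}} f_k(y)/(x-y) dy|² dx ≤ C·2^{-k}`;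
in particular these tail integrals tend to `0` as `k → ∞`. -/
theorem stmt6 :
    ∃ C : ℝ, 0 < C ∧
      (∀ k : ℕ, 2 ≤ k →
        ∫ x in Set.Ici (1:ℝ),
            |∫ y in Set.Icc (1/2 - (2:ℝ) ^ (-(k:ℝ))) (1/2 + (2:ℝ) ^ (-(k:ℝ))),
                f k y / (x - y)| ^ 2
          ≤ C * (2:ℝ) ^ (-(k:ℝ))) ∧
      Filter.Tendsto
        (fun k : ℕ => ∫ x in Set.Ici (1:ℝ),
            |∫ y in Set.Icc (1/2 - (2:ℝ) ^ (-(k:ℝ))) (1/2 + (2:ℝ) ^ (-(k:ℝ))),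
                f k y / (x - y)| ^ 2)
        Filter.atTop (nhds 0) := by
  refine ⟨32, by norm_num, outer_bound, ?_⟩
  have hlim : Filter.Tendsto (fun k : ℕ => 32 * (2:ℝ) ^ (-(k:ℝ))) Filter.atTop (nhds 0) := by
    have h := (tendsto_pow_atTop_nhds_zero_of_lt_one (r := (1/2:ℝ))
      (by norm_num) (by norm_num)).const_mul 32
    rw [mul_zero] at h
    refine h.congr fun k => ?_
    rw [Real.rpow_neg (by norm_num), Real.rpow_natCast]
    simp
  refine squeeze_zero' ?_ ?_ hlim
  · exact Filter.Eventually.of_forall fun k => integral_nonneg fun x => by positivity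
  · filter_upwards [Filter.eventually_ge_atTop 2] with k hk
    exact outer_bound k hk
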